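/- arXiv:1905.08153 — 2 statements merged into one kernel-verified Lean document; each statement's English description precedes it below -/
import Mathlib

section
/- Let w ∈ ℍₛ with w ∉ ℝ, write w₀ = Re(w), and assume I_w ≥ 0. (i) If w₀ − √(I_w) > 0, then x ∈ ℍₛ satisfies x² = w if and only if x = ±(w + √(I_w))/√(2(w₀ + √(I_w))) or x = ±(w − √(I_w))/√(2(w₀ − √(I_w))). (ii) If w₀ + √(I_w) > 0 ≥ w₀ − √(I_w), then x² = w if and only if x = ±(√(I_w) + w)/√(2(w₀ + √(I_w))). -/
open Quaternion

/-- `I_x = x̄x = x₀² + x₁² − x₂² − x₃²`. -/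
def SplitQuat.Ix (x : ℍ[ℝ,-1,1]) : ℝ := x.re ^ 2 + x.imI ^ 2 - x.imJ ^ 2 - x.imK ^ 2

open SplitQuat

/-!
In any quaternion algebra, `x² + N(x) = T(x) x` where `T` and `N` are the reduced trace and norm.
If `x² = w` is not a scalar, then `r := T(x)` is nonzero, so `x = r⁻¹ (w + t)` with `t := N(x)`;
here `t² = N(w)` because `N` is multiplicative, and `r² = T(w) + 2t` by taking traces. Conversely,
`t² = N(w)` implies `(w + t)² = (T(w) + 2t) w`, so these conditions describe all square roots.
Over `ℝ` they leave only the two values `t = ±√N(w)`, each contributing when `T(w) + 2t > 0`.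
-/

section CommRing

variable {R : Type*} [CommRing R] {c₁ c₂ c₃ : R}

/-- The reduced trace `q + q̄` of an element of a quaternion algebra, as a scalar. -/
def reducedTrace (q : ℍ[R,c₁,c₂,c₃]) : R := 2 * q.re + c₂ * q.imI

/-- The reduced norm `q̄ q` of an element of a quaternion algebra, as a scalar (the product has no
imaginary part). It extends `SplitQuat.Ix` to all quaternion algebras. -/
def reducedNorm (q : ℍ[R,c₁,c₂,c₃]) : R := (star q * q).re

theorem reducedTrace_eq_two_mul_re {a b : R} (q : ℍ[R,a,b]) : reducedTrace q = 2 * q.re := by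
  rw [reducedTrace, zero_mul, add_zero]

theorem star_mul_self_eq_coe_reducedNorm (q : ℍ[R,c₁,c₂,c₃]) : star q * q = reducedNorm q :=
  q.star_mul_eq_coe

theorem reducedNorm_mul (a b : ℍ[R,c₁,c₂,c₃]) :
    reducedNorm (a * b) = reducedNorm a * reducedNorm b := by
  apply QuaternionAlgebra.coe_injective (c₁ := c₁) (c₂ := c₂) (c₃ := c₃)
  calc ((reducedNorm (a * b) : R) : ℍ[R,c₁,c₂,c₃])
      = star b * (star a * a) * b := by
        rw [← star_mul_self_eq_coe_reducedNorm, star_mul]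
        simp only [mul_assoc]
    _ = reducedNorm a * (star b * b) := by
        rw [star_mul_self_eq_coe_reducedNorm a, ← QuaternionAlgebra.coe_commutes, mul_assoc]
    _ = ↑(reducedNorm a * reducedNorm b) := by
        rw [star_mul_self_eq_coe_reducedNorm, QuaternionAlgebra.coe_mul]

theorem reducedNorm_sq (q : ℍ[R,c₁,c₂,c₃]) : reducedNorm (q ^ 2) = reducedNorm q ^ 2 := by
  rw [sq, sq, reducedNorm_mul]

theorem reducedTrace_sq (q : ℍ[R,c₁,c₂,c₃]) :
    reducedTrace (q ^ 2) = reducedTrace q ^ 2 - 2 * reducedNorm q := by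
  simp only [reducedTrace, reducedNorm, sq, QuaternionAlgebra.re_mul, QuaternionAlgebra.imI_mul,
    QuaternionAlgebra.re_star, QuaternionAlgebra.imI_star, QuaternionAlgebra.imJ_star,
    QuaternionAlgebra.imK_star]
  ring

theorem sq_add_coe_reducedNorm (q : ℍ[R,c₁,c₂,c₃]) :
    q ^ 2 + reducedNorm q = reducedTrace q • q := by
  have hstar : star q = reducedTrace q - q := QuaternionAlgebra.star_eq_two_re_sub q
  rw [← star_mul_self_eq_coe_reducedNorm, hstar, sub_mul, sq, add_sub_cancel,
    QuaternionAlgebra.coe_mul_eq_smul]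

theorem add_coe_sq_of_sq_eq_reducedNorm {w : ℍ[R,c₁,c₂,c₃]} {t : R} (ht : t ^ 2 = reducedNorm w) :
    (w + t) ^ 2 = (reducedTrace w + 2 * t) • w := by
  calc (w + t) ^ 2 = w ^ 2 + ↑(t ^ 2) + (2 * t) • w := by
        rw [sq, add_mul, mul_add, mul_add, QuaternionAlgebra.mul_coe_eq_smul,
          QuaternionAlgebra.coe_mul_eq_smul, ← QuaternionAlgebra.coe_mul, ← sq, ← sq, two_mul,
          add_smul]
        abel
    _ = (reducedTrace w + 2 * t) • w := by
        rw [ht, sq_add_coe_reducedNorm, add_smul]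

end CommRing

theorem sq_eq_iff_exists_inv_smul_add {K : Type*} [Field K] {c₁ c₂ c₃ : K} {w : ℍ[K,c₁,c₂,c₃]}
    (hw : ∀ r : K, w ≠ r) (x : ℍ[K,c₁,c₂,c₃]) :
    x ^ 2 = w ↔ ∃ t r : K, t ^ 2 = reducedNorm w ∧ r ≠ 0 ∧ r ^ 2 = reducedTrace w + 2 * t ∧
      x = r⁻¹ • (w + t) := by
  constructor
  · rintro rfl
    have htrace : reducedTrace x ≠ 0 := fun h ↦ hw (-reducedNorm x) <| by
      rw [QuaternionAlgebra.coe_neg, eq_neg_iff_add_eq_zero, sq_add_coe_reducedNorm, h, zero_smul]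
    refine ⟨reducedNorm x, reducedTrace x, (reducedNorm_sq x).symm, htrace, ?_, ?_⟩
    · rw [reducedTrace_sq, sub_add_cancel]
    · rw [sq_add_coe_reducedNorm, inv_smul_smul₀ htrace]
  · rintro ⟨t, r, ht, hr, hrt, rfl⟩
    rw [smul_pow, add_coe_sq_of_sq_eq_reducedNorm ht, ← hrt, inv_pow,
      inv_smul_smul₀ (pow_ne_zero 2 hr)]

theorem ne_zero_and_sq_eq_iff_sqrt {r d : ℝ} : r ≠ 0 ∧ r ^ 2 = d ↔ 0 < d ∧ (r = √d ∨ r = -√d) := by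
  constructor
  · rintro ⟨hr, rfl⟩
    have hpos : 0 < r ^ 2 := by positivity
    exact ⟨hpos, sq_eq_sq_iff_eq_or_eq_neg.mp (Real.sq_sqrt hpos.le).symm⟩
  · rintro ⟨hd, rfl | rfl⟩ <;> simp [Real.sq_sqrt hd.le, (Real.sqrt_pos.mpr hd).ne']

section Real

variable {c₁ c₂ c₃ : ℝ} {w : ℍ[ℝ,c₁,c₂,c₃]}

theorem sq_eq_iff_exists_inv_sqrt_smul_add (hw : ∀ r : ℝ, w ≠ r) (x : ℍ[ℝ,c₁,c₂,c₃]) :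
    x ^ 2 = w ↔ ∃ t : ℝ, t ^ 2 = reducedNorm w ∧ 0 < reducedTrace w + 2 * t ∧
      (x = (√(reducedTrace w + 2 * t))⁻¹ • (w + t) ∨
        x = -((√(reducedTrace w + 2 * t))⁻¹ • (w + t))) := by
  rw [sq_eq_iff_exists_inv_smul_add hw]
  refine exists_congr fun t ↦ ?_
  simp only [exists_and_left, ← and_assoc (a := _ ≠ _), ne_zero_and_sq_eq_iff_sqrt, and_assoc,
    or_and_right, exists_or, exists_eq_left, inv_neg, neg_smul]

theorem sq_eq_iff_of_reducedNorm_nonneg (hw : ∀ r : ℝ, w ≠ r) (hN : 0 ≤ reducedNorm w)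
    (x : ℍ[ℝ,c₁,c₂,c₃]) :
    let s := √(reducedNorm w)
    let p := (√(reducedTrace w + 2 * s))⁻¹
    let q := (√(reducedTrace w - 2 * s))⁻¹
    x ^ 2 = w ↔
      (0 < reducedTrace w + 2 * s ∧ (x = p • (w + s) ∨ x = -(p • (w + s)))) ∨
      (0 < reducedTrace w - 2 * s ∧ (x = q • (w - s) ∨ x = -(q • (w - s)))) := by
  intro s p q
  have ht (t : ℝ) : t ^ 2 = reducedNorm w ↔ t = s ∨ t = -s := by
    rw [← Real.sq_sqrt hN, sq_eq_sq_iff_eq_or_eq_neg]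
  simp only [sq_eq_iff_exists_inv_sqrt_smul_add hw, ht, or_and_right, exists_or, exists_eq_left,
    mul_neg, QuaternionAlgebra.coe_neg, ← sub_eq_add_neg, p, q]

theorem stmt4_general (hw : ∀ r : ℝ, w ≠ r) (hN : 0 ≤ reducedNorm w) :
    let s := √(reducedNorm w)
    let p := (√(reducedTrace w + 2 * s))⁻¹
    let q := (√(reducedTrace w - 2 * s))⁻¹
    (0 < reducedTrace w - 2 * s → ∀ x : ℍ[ℝ,c₁,c₂,c₃], x ^ 2 = w ↔
      (x = p • (w + s) ∨ x = -(p • (w + s)) ∨ x = q • (w - s) ∨ x = -(q • (w - s)))) ∧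
    (0 < reducedTrace w + 2 * s → reducedTrace w - 2 * s ≤ 0 → ∀ x : ℍ[ℝ,c₁,c₂,c₃], x ^ 2 = w ↔
      (x = p • (s + w) ∨ x = -(p • (s + w)))) := by
  intro s p q
  have hroots := sq_eq_iff_of_reducedNorm_nonneg hw hN
  refine ⟨fun hsub x ↦ ?_, fun hadd hsub x ↦ ?_⟩
  · have hadd : 0 < reducedTrace w + 2 * s := by linarith [Real.sqrt_nonneg (reducedNorm w)]
    simp only [hroots, s, p, q, hadd, hsub, true_and, or_assoc]
  · simp only [hroots, s, p, hadd, hsub.not_gt, true_and, false_and, or_false, add_comm]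

end Real

theorem SplitQuat.Ix_eq_reducedNorm (x : ℍ[ℝ,-1,1]) : Ix x = reducedNorm x := by
  simp only [Ix, reducedNorm, QuaternionAlgebra.re_mul, QuaternionAlgebra.re_star,
    QuaternionAlgebra.imI_star, QuaternionAlgebra.imJ_star, QuaternionAlgebra.imK_star]
  ring

/-- explicit square roots of a non-real split quaternion `w` with
`I_w ≥ 0`. (i) If `w₀ − √(I_w) > 0`, then `x² = w` iff
`x = ±(w + √(I_w))/√(2(w₀ + √(I_w)))` or `x = ±(w − √(I_w))/√(2(w₀ − √(I_w)))`.
(ii) If `w₀ + √(I_w) > 0 ≥ w₀ − √(I_w)`, then `x² = w` iff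
`x = ±(√(I_w) + w)/√(2(w₀ + √(I_w)))`. -/
theorem stmt4 (w : ℍ[ℝ,-1,1]) (hw : ∀ r : ℝ, w ≠ (r : ℍ[ℝ,-1,1]))
    (hI : 0 ≤ Ix w) :
    let s : ℝ := Real.sqrt (Ix w)
    let p : ℝ := (Real.sqrt (2 * (w.re + s)))⁻¹
    let q : ℝ := (Real.sqrt (2 * (w.re - s)))⁻¹
    (0 < w.re - s → ∀ x : ℍ[ℝ,-1,1],
        x ^ 2 = w ↔
        (x = ((p : ℝ) : ℍ[ℝ,-1,1]) * (w + ((s : ℝ) : ℍ[ℝ,-1,1])) ∨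
          x = -(((p : ℝ) : ℍ[ℝ,-1,1]) * (w + ((s : ℝ) : ℍ[ℝ,-1,1]))) ∨
          x = ((q : ℝ) : ℍ[ℝ,-1,1]) * (w - ((s : ℝ) : ℍ[ℝ,-1,1])) ∨
          x = -(((q : ℝ) : ℍ[ℝ,-1,1]) * (w - ((s : ℝ) : ℍ[ℝ,-1,1]))))) ∧
    (0 < w.re + s → w.re - s ≤ 0 → ∀ x : ℍ[ℝ,-1,1],
        x ^ 2 = w ↔
        (x = ((p : ℝ) : ℍ[ℝ,-1,1]) * (((s : ℝ) : ℍ[ℝ,-1,1]) + w) ∨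
          x = -(((p : ℝ) : ℍ[ℝ,-1,1]) * (((s : ℝ) : ℍ[ℝ,-1,1]) + w)))) := by
  simpa only [Ix_eq_reducedNorm, reducedTrace_eq_two_mul_re, QuaternionAlgebra.coe_mul_eq_smul,
    ← mul_add, ← mul_sub, ← not_lt, Nat.ofNat_pos, mul_pos_iff_of_pos_left]
    using stmt4_general hw (Ix_eq_reducedNorm w ▸ hI)
end

section
/- Let a = 1 + a₂j + a₃k with a₂² + a₃² = 1, b = b₁i + b₂j + b₃k with P_{a,b} = 0 and I_b ≠ 0, and c = c₀ + c₁i + c₂j + c₃k in ℍₛ with I_b + 2P_{a,c} = 0, I_c = 0, and P_{b,c} = 0. Set δ = a₂b₃ − a₃b₂ + b₁ (which is nonzero), t₁ = c₂ − c₀a₂ − a₃c₁, t₂ = c₃ − c₀a₃ + a₂c₁, and F = t₁² + t₂² + (b₃t₁ − b₂t₂)δ + c₀δ². If F = 0, then for all x₀, x₁ ∈ ℝ, the element x = x₀ + x₁i + x₂j + x₃k with x₂ = −t₂/δ − ((a₂b₁+b₃)/δ)x₀ − ((a₃b₁−b₂)/δ)x₁ and x₃ = t₁/δ + ((b₂−a₃b₁)/δ)x₀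 + ((a₂b₁+b₃)/δ)x₁ satisfies ax² + bx + c = 0. Conversely, if ax² + bx + c = 0 has a solution x with I_{2Re(x)·a + b} ≠ 0, then F = 0. -/
open Quaternion

/-- `P_{x,y} = x₀y₀ + x₁y₁ − x₂y₂ − x₃y₃`. -/
def SplitQuat.P (x y : ℍ[ℝ,-1,1]) : ℝ :=
  x.re * y.re + x.imI * y.imI - x.imJ * y.imJ - x.imK * y.imK

open SplitQuat

/-!
Over a field `K` with `2 ≠ 0`, identify `K ⊕ K i` with `K[i]` and put `α = a₂ + a₃ i`, so that
`a = 1 + α j` with `α ᾱ = 1`. The orthogonality relations force `b = a z + u a` and `c = u a z` for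
some `z = n + m i` and `u = -n + h i` in `K[i]` with `δ = 2 h ≠ 0`. Hence
`a x² + b x + c = a (x + z) x + u a (x + z)`, which vanishes as soon as `a (x + z) = 0`. Since `a`
is a zero divisor, this linear equation has a two-parameter family of solutions, which is the
stated one. The same parametrisation of `b` and `c` makes `F` vanish identically.
-/

namespace SplitQuat

/-- The norm form `I` of the split quaternions over a commutative ring, used to state the theorem
over fields other than `ℝ`. It is written like `Ix`, so that for `ℝ` the two agree
definitionally. -/
def normForm {R : Type*} [CommRing R] (x : ℍ[R,-1,1]) : R :=
  x.re ^ 2 + x.imI ^ 2 - x.imJ ^ 2 - x.imK ^ 2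

/-- The symmetric bilinear form `P` of the split quaternions over a commutative ring, used to state
the theorem over fields other than `ℝ`; here `bilinForm x x = normForm x`. It is written like `P`,
so that for `ℝ` the two agree definitionally. -/
def bilinForm {R : Type*} [CommRing R] (x y : ℍ[R,-1,1]) : R :=
  x.re * y.re + x.imI * y.imI - x.imJ * y.imJ - x.imK * y.imK

theorem quadratic_eq_mul_add {A : Type*} [Semiring A] (a u z x : A) :
    a * x ^ 2 + (a * z + u * a) * x + u * a * z = a * (x + z) * x + u * (a * (x + z)) := by
  simp only [sq, mul_add, add_mul, mul_assoc]
  abel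

section CommRing

variable {R : Type*} [CommRing R] {a₂ a₃ : R}

theorem mk_eq_mul_add_mul_iff {b₁ b₂ b₃ h m n : R} :
    (⟨0, b₁, b₂, b₃⟩ : ℍ[R,-1,1])
        = ⟨1, 0, a₂, a₃⟩ * ⟨n, m, 0, 0⟩ + ⟨-n, h, 0, 0⟩ * ⟨1, 0, a₂, a₃⟩ ↔
      b₁ = h + m ∧ b₂ = -a₃ * (h - m) ∧ b₃ = a₂ * (h - m) := by
  simp only [QuaternionAlgebra.mk_mul_mk, QuaternionAlgebra.mk_add_mk, QuaternionAlgebra.mk.injEq]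
  ring_nf
  simp only [true_and]

theorem mk_eq_mul_mul_iff {c₀ c₁ c₂ c₃ h m n : R} :
    (⟨c₀, c₁, c₂, c₃⟩ : ℍ[R,-1,1]) = ⟨-n, h, 0, 0⟩ * ⟨1, 0, a₂, a₃⟩ * ⟨n, m, 0, 0⟩ ↔
      c₀ = -n ^ 2 - h * m ∧ c₁ = n * (h - m) ∧
        c₂ = a₂ * (h * m - n ^ 2) - a₃ * (n * (h + m)) ∧
        c₃ = a₃ * (h * m - n ^ 2) + a₂ * (n * (h + m)) := by
  simp only [QuaternionAlgebra.mk_mul_mk, QuaternionAlgebra.mk.injEq]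
  ring_nf

theorem mk_mul_eq_zero_iff (ha : a₂ ^ 2 + a₃ ^ 2 = 1) {y : ℍ[R,-1,1]} :
    (⟨1, 0, a₂, a₃⟩ : ℍ[R,-1,1]) * y = 0 ↔
      y.imJ = -a₂ * y.re - a₃ * y.imI ∧ y.imK = a₂ * y.imI - a₃ * y.re := by
  simp only [QuaternionAlgebra.ext_iff, QuaternionAlgebra.re_mul, QuaternionAlgebra.imI_mul,
    QuaternionAlgebra.imJ_mul, QuaternionAlgebra.imK_mul, QuaternionAlgebra.re_zero,
    QuaternionAlgebra.imI_zero, QuaternionAlgebra.imJ_zero, QuaternionAlgebra.imK_zero]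
  constructor
  · rintro ⟨-, -, hJ, hK⟩
    exact ⟨by linear_combination hJ, by linear_combination hK⟩
  · rintro ⟨hJ, hK⟩
    rw [hJ, hK]
    refine ⟨?_, ?_, by ring, by ring⟩
    · linear_combination -y.re * ha
    · linear_combination -y.imI * ha

theorem eq_cross_of_orthogonal_unit (ha : a₂ ^ 2 + a₃ ^ 2 = 1) {b₂ b₃ : R}
    (hab : a₂ * b₂ + a₃ * b₃ = 0) :
    b₂ = -a₃ * (a₂ * b₃ - a₃ * b₂) ∧ b₃ = a₂ * (a₂ * b₃ - a₃ * b₂) :=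
  ⟨by linear_combination a₂ * hab - b₂ * ha, by linear_combination a₃ * hab - b₃ * ha⟩

theorem eq_dot_add_cross_of_unit (ha : a₂ ^ 2 + a₃ ^ 2 = 1) (c₂ c₃ : R) :
    c₂ = a₂ * (a₂ * c₂ + a₃ * c₃) - a₃ * (a₂ * c₃ - a₃ * c₂) ∧
      c₃ = a₃ * (a₂ * c₂ + a₃ * c₃) + a₂ * (a₂ * c₃ - a₃ * c₂) :=
  ⟨by linear_combination -c₂ * ha, by linear_combination -c₃ * ha⟩

end CommRing

section Field

variable {K : Type*} [Field K] [NeZero (2 : K)] {a₂ a₃ b₁ b₂ b₃ c₀ c₁ c₂ c₃ : K}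

/- The case `α = 1`, where `b = b₁ i + s k` and `c = c₀ + c₁ i + p j + q k`. -/
theorem exists_parameters_of_isotropic {s p q : K} (hb : b₁ ^ 2 - s ^ 2 ≠ 0)
    (hbc₀ : b₁ ^ 2 - s ^ 2 + 2 * (c₀ - p) = 0) (hc : c₀ ^ 2 + c₁ ^ 2 - p ^ 2 - q ^ 2 = 0)
    (hbc : b₁ * c₁ - s * q = 0) :
    ∃ h m n : K, h ≠ 0 ∧ b₁ = h + m ∧ s = h - m ∧ c₀ = -n ^ 2 - h * m ∧ c₁ = n * (h - m) ∧
      p = h * m - n ^ 2 ∧ q = n * (h + m) := by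
  have h2 : (2 : K) ≠ 0 := two_ne_zero
  obtain ⟨h, m, rfl, rfl⟩ : ∃ h m : K, b₁ = h + m ∧ s = h - m :=
    ⟨(b₁ + s) / 2, (b₁ - s) / 2, by field_simp; ring, by field_simp; ring⟩
  have hhm : 2 * 2 * h * m ≠ 0 := fun h0 => hb (by linear_combination h0)
  have hh : h ≠ 0 := right_ne_zero_of_mul (left_ne_zero_of_mul hhm)
  obtain ⟨n, hn⟩ : ∃ n, c₁ + q = 2 * h * n := ⟨(c₁ + q) / (2 * h), by field_simp⟩
  have hp : p = c₀ + 2 * h * m := by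
    apply mul_left_cancel₀ h2
    linear_combination -hbc₀
  have hc₁ : c₁ = n * (h - m) := by
    apply mul_left_cancel₀ (mul_ne_zero h2 hh)
    linear_combination hbc + (h - m) * hn
  have hq : q = n * (h + m) := by linear_combination hn - hc₁
  have hc₀ : c₀ = -n ^ 2 - h * m := by
    apply mul_left_cancel₀ hhm
    rw [hp, hc₁, hq] at hc
    linear_combination -hc
  exact ⟨h, m, n, hh, rfl, rfl, hc₀, hc₁, by rw [hp, hc₀]; ring, hq⟩

theorem exists_factors (ha : a₂ ^ 2 + a₃ ^ 2 = 1)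
    (hPab : bilinForm (⟨1, 0, a₂, a₃⟩ : ℍ[K,-1,1]) ⟨0, b₁, b₂, b₃⟩ = 0)
    (hIb : normForm (⟨0, b₁, b₂, b₃⟩ : ℍ[K,-1,1]) ≠ 0)
    (hIbPac : normForm (⟨0, b₁, b₂, b₃⟩ : ℍ[K,-1,1])
      + 2 * bilinForm (⟨1, 0, a₂, a₃⟩ : ℍ[K,-1,1]) ⟨c₀, c₁, c₂, c₃⟩ = 0)
    (hIc : normForm (⟨c₀, c₁, c₂, c₃⟩ : ℍ[K,-1,1]) = 0)
    (hPbc : bilinForm (⟨0, b₁, b₂, b₃⟩ : ℍ[K,-1,1]) ⟨c₀, c₁, c₂, c₃⟩ = 0) :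
    ∃ h m n : K, h ≠ 0 ∧
      (⟨0, b₁, b₂, b₃⟩ : ℍ[K,-1,1])
        = ⟨1, 0, a₂, a₃⟩ * ⟨n, m, 0, 0⟩ + ⟨-n, h, 0, 0⟩ * ⟨1, 0, a₂, a₃⟩ ∧
      (⟨c₀, c₁, c₂, c₃⟩ : ℍ[K,-1,1])
        = ⟨-n, h, 0, 0⟩ * ⟨1, 0, a₂, a₃⟩ * ⟨n, m, 0, 0⟩ := by
  simp only [bilinForm, normForm] at hPab hIb hIbPac hIc hPbc
  obtain ⟨hb₂, hb₃⟩ := eq_cross_of_orthogonal_unit ha (b₂ := b₂) (b₃ := b₃)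
    (by linear_combination -hPab)
  obtain ⟨hc₂, hc₃⟩ := eq_dot_add_cross_of_unit ha c₂ c₃
  set s := a₂ * b₃ - a₃ * b₂
  set p := a₂ * c₂ + a₃ * c₃
  set q := a₂ * c₃ - a₃ * c₂
  have hb : b₁ ^ 2 - s ^ 2 ≠ 0 := by
    rw [hb₂, hb₃] at hIb
    refine fun h0 => hIb ?_
    linear_combination h0 - s ^ 2 * ha
  have hbc₀ : b₁ ^ 2 - s ^ 2 + 2 * (c₀ - p) = 0 := by
    rw [hb₂, hb₃] at hIbPac
    linear_combination hIbPac + s ^ 2 * ha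
  have hc : c₀ ^ 2 + c₁ ^ 2 - p ^ 2 - q ^ 2 = 0 := by
    rw [hc₂, hc₃] at hIc
    linear_combination hIc + (p ^ 2 + q ^ 2) * ha
  have hbc : b₁ * c₁ - s * q = 0 := by
    rw [hb₂, hb₃] at hPbc
    linear_combination hPbc
  obtain ⟨h, m, n, hh, hb₁, hs, hc₀, hc₁, hp, hq⟩ := exists_parameters_of_isotropic hb hbc₀ hc hbc
  rw [hs] at hb₂ hb₃
  rw [hp, hq] at hc₂ hc₃
  exact ⟨h, m, n, hh, mk_eq_mul_add_mul_iff.mpr ⟨hb₁, hb₂, hb₃⟩,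
    mk_eq_mul_mul_iff.mpr ⟨hc₀, hc₁, hc₂, hc₃⟩⟩

end Field

end SplitQuat

theorem stmt19_general {K : Type*} [Field K] [NeZero (2 : K)]
    {a₂ a₃ b₁ b₂ b₃ c₀ c₁ c₂ c₃ : K} (ha : a₂ ^ 2 + a₃ ^ 2 = 1)
    (hPab : bilinForm (⟨1, 0, a₂, a₃⟩ : ℍ[K,-1,1]) ⟨0, b₁, b₂, b₃⟩ = 0)
    (hIb : normForm (⟨0, b₁, b₂, b₃⟩ : ℍ[K,-1,1]) ≠ 0)
    (hIbPac : normForm (⟨0, b₁, b₂, b₃⟩ : ℍ[K,-1,1])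
      + 2 * bilinForm (⟨1, 0, a₂, a₃⟩ : ℍ[K,-1,1]) ⟨c₀, c₁, c₂, c₃⟩ = 0)
    (hIc : normForm (⟨c₀, c₁, c₂, c₃⟩ : ℍ[K,-1,1]) = 0)
    (hPbc : bilinForm (⟨0, b₁, b₂, b₃⟩ : ℍ[K,-1,1]) ⟨c₀, c₁, c₂, c₃⟩ = 0) :
    let δ : K := a₂ * b₃ - a₃ * b₂ + b₁
    let t₁ : K := c₂ - c₀ * a₂ - a₃ * c₁
    let t₂ : K := c₃ - c₀ * a₃ + a₂ * c₁
    δ ≠ 0 ∧ t₁ ^ 2 + t₂ ^ 2 + (b₃ * t₁ - b₂ * t₂) * δ + c₀ * δ ^ 2 = 0 ∧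
    ∀ x₀ x₁ : K,
      let x : ℍ[K,-1,1] := ⟨x₀, x₁,
        -t₂ / δ - ((a₂ * b₁ + b₃) / δ) * x₀ - ((a₃ * b₁ - b₂) / δ) * x₁,
        t₁ / δ + ((b₂ - a₃ * b₁) / δ) * x₀ + ((a₂ * b₁ + b₃) / δ) * x₁⟩
      (⟨1, 0, a₂, a₃⟩ : ℍ[K,-1,1]) * x ^ 2 + ⟨0, b₁, b₂, b₃⟩ * x + ⟨c₀, c₁, c₂, c₃⟩ = 0 := by
  intro δ t₁ t₂
  obtain ⟨h, m, n, hh, hb, hc⟩ := exists_factors ha hPab hIb hIbPac hIc hPbc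
  obtain ⟨hb₁, hb₂, hb₃⟩ := mk_eq_mul_add_mul_iff.mp hb
  obtain ⟨hc₀, hc₁, hc₂, hc₃⟩ := mk_eq_mul_mul_iff.mp hc
  have hδ : δ = 2 * h := by
    simp only [δ, hb₁, hb₂, hb₃]
    linear_combination (h - m) * ha
  have ht₁ : t₁ = 2 * h * (a₂ * m - a₃ * n) := by
    simp only [t₁, hc₀, hc₁, hc₂]
    ring
  have ht₂ : t₂ = 2 * h * (a₃ * m + a₂ * n) := by
    simp only [t₂, hc₀, hc₁, hc₃]
    ring
  have h2 : (2 : K) ≠ 0 := two_ne_zero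
  refine ⟨hδ ▸ mul_ne_zero h2 hh, ?_, ?_⟩
  · rw [hδ, ht₁, ht₂, hb₂, hb₃, hc₀]
    linear_combination 4 * h ^ 2 * (n ^ 2 + h * m) * ha
  · intro x₀ x₁ x
    have hx : (⟨1, 0, a₂, a₃⟩ : ℍ[K,-1,1]) * (x + ⟨n, m, 0, 0⟩) = 0 := by
      refine (mk_mul_eq_zero_iff ha).mpr ⟨?_, ?_⟩ <;>
      · simp only [x, hδ, ht₁, ht₂, hb₁, hb₂, hb₃, QuaternionAlgebra.mk_add_mk]
        field_simp
        ring
    rw [hb, hc, quadratic_eq_mul_add, hx, zero_mul, mul_zero, add_zero]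

/-- Theorem 5.6: under `P_{a,b} = 0`, `I_b ≠ 0`,
`I_b + 2P_{a,c} = 0`, `I_c = 0`, `P_{b,c} = 0`, the quantity `δ` is nonzero;
if `F = t₁² + t₂² + (b₃t₁ − b₂t₂)δ + c₀δ² = 0` then for all `x₀, x₁` the
element `x = x₀ + x₁i + x₂j + x₃k` (with the stated `x₂, x₃`) is a root of
`ax² + bx + c = 0`; conversely the existence of a root `x` with
`I_{2Re(x)·a + b} ≠ 0` forces `F = 0`. -/
theorem stmt19 (a₂ a₃ b₁ b₂ b₃ c₀ c₁ c₂ c₃ : ℝ)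
    (ha : a₂ ^ 2 + a₃ ^ 2 = 1)
    (hPab : P (⟨1, 0, a₂, a₃⟩ : ℍ[ℝ,-1,1]) (⟨0, b₁, b₂, b₃⟩ : ℍ[ℝ,-1,1]) = 0)
    (hIb : Ix (⟨0, b₁, b₂, b₃⟩ : ℍ[ℝ,-1,1]) ≠ 0)
    (hIbPac : Ix (⟨0, b₁, b₂, b₃⟩ : ℍ[ℝ,-1,1])
        + 2 * P (⟨1, 0, a₂, a₃⟩ : ℍ[ℝ,-1,1]) (⟨c₀, c₁, c₂, c₃⟩ : ℍ[ℝ,-1,1]) = 0)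
    (hIc : Ix (⟨c₀, c₁, c₂, c₃⟩ : ℍ[ℝ,-1,1]) = 0)
    (hPbc : P (⟨0, b₁, b₂, b₃⟩ : ℍ[ℝ,-1,1]) (⟨c₀, c₁, c₂, c₃⟩ : ℍ[ℝ,-1,1]) = 0) :
    let a : ℍ[ℝ,-1,1] := ⟨1, 0, a₂, a₃⟩
    let b : ℍ[ℝ,-1,1] := ⟨0, b₁, b₂, b₃⟩
    let c : ℍ[ℝ,-1,1] := ⟨c₀, c₁, c₂, c₃⟩
    let δ : ℝ := a₂ * b₃ - a₃ * b₂ + b₁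
    let t₁ : ℝ := c₂ - c₀ * a₂ - a₃ * c₁
    let t₂ : ℝ := c₃ - c₀ * a₃ + a₂ * c₁
    let F : ℝ := t₁ ^ 2 + t₂ ^ 2 + (b₃ * t₁ - b₂ * t₂) * δ + c₀ * δ ^ 2
    δ ≠ 0 ∧
    (F = 0 → ∀ x₀ x₁ : ℝ,
      a * (⟨x₀, x₁,
          -t₂ / δ - ((a₂ * b₁ + b₃) / δ) * x₀ - ((a₃ * b₁ - b₂) / δ) * x₁,
          t₁ / δ + ((b₂ - a₃ * b₁) / δ) * x₀ + ((a₂ * b₁ + b₃) / δ) * x₁⟩ : ℍ[ℝ,-1,1]) ^ 2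
        + b * (⟨x₀, x₁,
          -t₂ / δ - ((a₂ * b₁ + b₃) / δ) * x₀ - ((a₃ * b₁ - b₂) / δ) * x₁,
          t₁ / δ + ((b₂ - a₃ * b₁) / δ) * x₀ + ((a₂ * b₁ + b₃) / δ) * x₁⟩ : ℍ[ℝ,-1,1])
        + c = 0) ∧
    ((∃ x : ℍ[ℝ,-1,1], a * x ^ 2 + b * x + c = 0 ∧
        Ix (((2 * x.re : ℝ) : ℍ[ℝ,-1,1]) * a + b) ≠ 0) → F = 0) :=
  let ⟨hδ, hF, hroot⟩ := stmt19_general ha hPab hIb hIbPac hIc hPbc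
  ⟨hδ, fun _ => hroot, fun _ => hF⟩
end
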